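/- Let B be a separable stable C*-algebra and K a compact Hausdorff space. Then the C*-algebra C(K) ⊗ C(B) (continuous functions from K to the corona algebra of B) is K₁-injective and K₁-surjective: the natural map U(C(K)⊗C(B))/U₀(C(K)⊗C(B)) → K₁(C(K)⊗C(B)) is a bijection. -/

import Mathlib

open scoped MultiplierAlgebra

/-- The spectral projection `1_{≥0}(x)` of a self-adjoint element onto `[0, ∞)`,
obtained by applying the indicator function of `[0, ∞)` via the continuous
functional calculus. -/
noncomputable def posSpectralProj {C : Type*} [CStarAlgebra C] (x : C) : C :=
  cfc (fun t : ℝ => if 0 ≤ t then (1 : ℝ) else 0) x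

/-- `x ∈ 𝓜(ℂ, B)` belongs to (the canonical image of) the ideal `B` of its
multiplier algebra. -/
def inCanonicalIdeal {B : Type*} [NonUnitalCStarAlgebra B] (x : 𝓜(ℂ, B)) : Prop :=
  ∃ b : B, (b : 𝓜(ℂ, B)) = x

/-- Murray–von Neumann equivalence of projections. -/
def MvNEquiv {C : Type*} [Mul C] [Star C] (p q : C) : Prop :=
  ∃ v : C, star v * v = p ∧ v * star v = q

/-- `B` is a stable C*-algebra, encoded via the standard characterization (for σ-unital,
in particular separable, `B`): the multiplier algebra `𝓜(ℂ, B)` contains a sequence of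
isometries with pairwise orthogonal ranges whose range projections sum to `1` strictly. -/
def IsStable (B : Type*) [NonUnitalCStarAlgebra B] : Prop :=
  ∃ s : ℕ → 𝓜(ℂ, B),
    (∀ n, star (s n) * s n = 1) ∧
    (∀ m n, m ≠ n → star (s m) * s n = 0) ∧
    ∀ b : B, Filter.Tendsto
      (fun N : ℕ => (∑ n ∈ Finset.range N, s n * star (s n)) * (b : 𝓜(ℂ, B)))
      Filter.atTop (nhds (b : 𝓜(ℂ, B)))

/-!
Let `Q` be the corona of `B`. Given countably many multipliers `X q`, thinning out the isometries
`s n` that witness stability and weighting them by a sequence `d` with `∑ star (d n) * d n = 1`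
strictly produces isometries `S = ∑ s (φ (2 n)) d n` and `T = ∑ s (φ (2 n + 1)) d n` of `𝓜(ℂ, B)`
with orthogonal ranges such that `star S * X q * T` is a norm convergent double series in `B` for
every `q`. Since the range of `u : C(K, Q)` is separable, such a pair of constant isometries
satisfies `star S * u * T = 0` in `C(K, Q)`.

For a unitary `u`, the ranges of `u T` and `S` are then orthogonal, as are those of `S` and `T`, so
swapping them along paths of unitaries joins `u` to some `x` with `x T = T`. As `x` is trivial on
the range of `T`, it is joined to a copy `1 + W (x - 1) W*` of itself carried by a subprojection of
that range. Using further isometries into this range, a path from a stabilization of `x` to `1`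
compresses to a path from that copy to `1`. The same compression `w ↦ 1 + V (w - 1) V*`, for a row
`V` of orthogonal isometries, turns a unitary matrix into a unitary element with the same K₁-class.
-/

section OrthogonalIsometries

/-- A family of isometries with pairwise orthogonal ranges in a unital `*`-ring: the generators of
a Toeplitz–Cuntz algebra. Two such isometries witness that the ring is properly infinite. -/
structure OrthogonalIsometries {ι A : Type*} [Ring A] [StarRing A] (V : ι → A) : Prop where
  star_mul_self (i : ι) : star (V i) * V i = 1
  star_mul_of_ne {i j : ι} (hij : i ≠ j) : star (V i) * V j = 0

namespace OrthogonalIsometries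

variable {ι κ A C : Type*} [Ring A] [StarRing A] [Ring C] [StarRing C] {V : ι → A}

theorem of_star_mul_eq_zero {S T : A} (hS : star S * S = 1) (hT : star T * T = 1)
    (hST : star S * T = 0) : OrthogonalIsometries ![S, T] where
  star_mul_self := Fin.forall_fin_two.2 ⟨hS, hT⟩
  star_mul_of_ne {i j} hij := by
    have hTS : star T * S = 0 := by simpa using congrArg star hST
    fin_cases i <;> fin_cases j <;> first | exact absurd rfl hij | assumption

theorem comp_injective (hV : OrthogonalIsometries V) {f : κ → ι} (hf : Function.Injective f) :
    OrthogonalIsometries (V ∘ f) where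
  star_mul_self i := hV.star_mul_self (f i)
  star_mul_of_ne hij := hV.star_mul_of_ne (hf.ne hij)

theorem map {F : Type*} [FunLike F A C] [RingHomClass F A C] [StarHomClass F A C]
    (hV : OrthogonalIsometries V) (φ : F) : OrthogonalIsometries fun i => φ (V i) where
  star_mul_self i := by rw [← map_star, ← map_mul, hV.star_mul_self, map_one]
  star_mul_of_ne hij := by rw [← map_star, ← map_mul, hV.star_mul_of_ne hij, map_zero]

theorem const_mul (hV : OrthogonalIsometries V) {T : A} (hT : star T * T = 1) :
    OrthogonalIsometries fun i => T * V i where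
  star_mul_self i := by
    rw [star_mul, mul_assoc, ← mul_assoc (star T), hT, one_mul, hV.star_mul_self]
  star_mul_of_ne hij := by
    rw [star_mul, mul_assoc, ← mul_assoc (star T), hT, one_mul, hV.star_mul_of_ne hij]

theorem star_pow_mul_pow {T : A} (hT : star T * T = 1) (n : ℕ) : star T ^ n * T ^ n = 1 := by
  induction n with
  | zero => simp
  | succ n ih => rw [pow_succ, pow_succ', mul_assoc, ← mul_assoc (star T), hT, one_mul, ih]

theorem pow_mul {V : Fin 2 → A} (hV : OrthogonalIsometries V) :
    OrthogonalIsometries fun n : ℕ => V 1 ^ n * V 0 where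
  star_mul_self n := by
    rw [star_mul, star_pow, mul_assoc, ← mul_assoc (star (V 1) ^ n),
      star_pow_mul_pow (hV.star_mul_self 1), one_mul, hV.star_mul_self]
  star_mul_of_ne {m n} hmn := by
    wlog hlt : m < n generalizing m n
    · have := this hmn.symm (hmn.symm.lt_of_le (not_lt.1 hlt))
      rw [← star_star (V 1 ^ n * V 0), ← star_mul, this, star_zero]
    obtain ⟨k, rfl⟩ := Nat.exists_eq_add_of_lt hlt
    calc star (V 1 ^ m * V 0) * (V 1 ^ (m + k + 1) * V 0)
        = star (V 0) * (star (V 1) ^ m * V 1 ^ m) * V 1 * V 1 ^ k * V 0 := by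
          rw [star_mul, star_pow, add_assoc, pow_add, pow_succ']
          simp only [mul_assoc]
      _ = 0 := by
          rw [star_pow_mul_pow (hV.star_mul_self 1), mul_one, hV.star_mul_of_ne zero_ne_one,
            zero_mul, zero_mul]

open Matrix in
theorem conjTranspose_replicateRow_mul [DecidableEq ι] (hV : OrthogonalIsometries V) :
    (replicateRow (Fin 1) V)ᴴ * replicateRow (Fin 1) V = 1 := by
  ext i j
  rcases eq_or_ne i j with rfl | hij
  · simp [mul_apply, hV.star_mul_self]
  · simp [mul_apply, hV.star_mul_of_ne hij, hij]

end OrthogonalIsometries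

end OrthogonalIsometries

section SymmetriesAndSwaps

variable {A : Type*} [Ring A] [StarRing A]

theorem one_add_smul_mem_unitary [Algebra ℂ A] [StarModule ℂ A] {f : A} (hf : IsStarProjection f)
    {z : ℂ} (hz : ‖z‖ = 1) : 1 + (z - 1) • f ∈ unitary A := by
  have hmul (y z : ℂ) (hyz : y * z = 1) : (1 + (y - 1) • f) * (1 + (z - 1) • f) = 1 := by
    have hcoef : (z - 1) + (y - 1) + (y - 1) * (z - 1) = 0 := by linear_combination hyz
    calc (1 + (y - 1) • f) * (1 + (z - 1) • f)
        = 1 + ((z - 1) + (y - 1) + (y - 1) * (z - 1)) • f := by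
          simp only [mul_add, add_mul, one_mul, mul_one, smul_mul_smul_comm,
            hf.isIdempotentElem.eq, add_smul]
          abel
      _ = 1 := by rw [hcoef, zero_smul, add_zero]
  have hstar : star (1 + (z - 1) • f) = 1 + (star z - 1) • f := by
    simp [star_smul, hf.isSelfAdjoint.star_eq]
  have hzz : star z * z = 1 := by simp [Complex.conj_mul', hz]
  rw [Unitary.mem_iff, hstar]
  exact ⟨hmul _ _ hzz, hmul _ _ (mul_comm z _ ▸ hzz)⟩

theorem isStarProjection_half_one_sub [Algebra ℂ A] [StarModule ℂ A] {w : A}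
    (hw : IsSelfAdjoint w) (hww : w * w = 1) : IsStarProjection ((2⁻¹ : ℂ) • (1 - w)) where
  isIdempotentElem := by
    have hsq : (1 - w) * (1 - w) = (2 : ℂ) • (1 - w) := by
      rw [two_smul]
      linear_combination (norm := noncomm_ring) hww
    rw [IsIdempotentElem, smul_mul_smul_comm, hsq, smul_smul]
    norm_num
  isSelfAdjoint := by simp [isSelfAdjoint_iff, hw.star_eq]

/-- The self-adjoint unitary exchanging the initial and final spaces of a partial isometry `v`
with `v * v = 0`, and acting as the identity on their common complement: for such `v` the square
of `v + star v` is the sum of the two projections. -/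
def partialIsometrySwap (v : A) : A := v + star v + 1 - (v + star v) * (v + star v)

theorem isSelfAdjoint_partialIsometrySwap (v : A) : IsSelfAdjoint (partialIsometrySwap v) := by
  simp [partialIsometrySwap, isSelfAdjoint_iff, add_comm]

theorem partialIsometrySwap_mul_star_mul_self {v : A} (hv : v * star v * v = v)
    (hvv : v * v = 0) : partialIsometrySwap v * (star v * v) = v := by
  have hvv' : star v * star v = 0 := by rw [← star_mul, hvv, star_zero]
  linear_combination (norm := (unfold partialIsometrySwap; noncomm_ring))
    hv + hvv' * v - star v * hv - v * hvv' * v - hvv * star v * v - star v * hvv' * v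

theorem partialIsometrySwap_mul_self {v : A} (hv : v * star v * v = v) (hvv : v * v = 0) :
    partialIsometrySwap v * partialIsometrySwap v = 1 := by
  have hvv' : star v * star v = 0 := by rw [← star_mul, hvv, star_zero]
  have hv' : star v * v * star v = star v := by
    simpa [mul_assoc] using congrArg star hv
  have hcube : (v + star v) * (v + star v) * (v + star v) = v + star v := by
    linear_combination (norm := noncomm_ring)
      hv + hv' + hvv * v + hvv * star v + v * hvv' + star v * hvv + hvv' * v + hvv' * star v
  unfold partialIsometrySwap
  generalize v + star v = g at hcube
  linear_combination (norm := noncomm_ring) (g - 2) * hcube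

end SymmetriesAndSwaps

section UnitaryPaths

variable {A : Type*} [Ring A] [StarRing A] [TopologicalSpace A] [IsTopologicalRing A]

theorem joinedIn_unitary_mul {a b c d : A} (hab : JoinedIn (unitary A : Set A) a b)
    (hcd : JoinedIn (unitary A : Set A) c d) : JoinedIn (unitary A : Set A) (a * c) (b * d) :=
  (hab.mul hcd).mono (Submonoid.coe_mul_self_eq _).le

variable [Algebra ℂ A] [StarModule ℂ A] [ContinuousSMul ℂ A]

theorem joinedIn_unitary_one_of_isSelfAdjoint {w : A} (hw : IsSelfAdjoint w) (hww : w * w = 1) :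
    JoinedIn (unitary A : Set A) w 1 := by
  let F : ℂ → A := fun z => 1 + (z - 1) • (2⁻¹ : ℂ) • (1 - w)
  have hrank : 1 < Module.rank ℝ ℂ := by simp [Complex.rank_real_complex]
  have hcircle : JoinedIn (Metric.sphere (0 : ℂ) 1) (-1) 1 :=
    (isPathConnected_sphere hrank 0 zero_le_one).joinedIn _ (by simp) _ (by simp)
  have hF : F '' Metric.sphere 0 1 ⊆ unitary A := by
    rintro _ ⟨z, hz, rfl⟩
    exact one_add_smul_mem_unitary (isStarProjection_half_one_sub hw hww)
      (mem_sphere_zero_iff_norm.1 hz)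
  have hF_neg_one : F (-1) = w := by
    simp only [F, smul_smul]
    norm_num
  have hF_one : F 1 = 1 := by simp [F]
  have hpath := (hcircle.map (f := F) (by fun_prop)).mono hF
  rwa [hF_neg_one, hF_one] at hpath

theorem joinedIn_partialIsometrySwap_one {v : A} (hv : v * star v * v = v) (hvv : v * v = 0) :
    JoinedIn (unitary A : Set A) (partialIsometrySwap v) 1 :=
  joinedIn_unitary_one_of_isSelfAdjoint (isSelfAdjoint_partialIsometrySwap v)
    (partialIsometrySwap_mul_self hv hvv)

theorem exists_joinedIn_one_mul_eq {s t : A} (hs : star s * s = 1) (ht : star t * t = 1)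
    (hst : star s * t = 0) : ∃ z : A, JoinedIn (unitary A : Set A) z 1 ∧ z * s = t := by
  set v := t * star s with hv_def
  have hvs : star v * v = s * star s := by
    rw [hv_def, star_mul, star_star, mul_assoc, ← mul_assoc (star t), ht, one_mul]
  have hv : v * star v * v = v := by
    rw [mul_assoc, hvs, hv_def, mul_assoc, ← mul_assoc (star s), hs, one_mul]
  have hvv : v * v = 0 := by
    rw [hv_def, mul_assoc, ← mul_assoc (star s), hst, zero_mul, mul_zero]
  refine ⟨partialIsometrySwap v, joinedIn_partialIsometrySwap_one hv hvv, ?_⟩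
  calc partialIsometrySwap v * s
      = partialIsometrySwap v * (star v * v) * s := by
        rw [hvs, mul_assoc, mul_assoc s, hs, mul_one]
    _ = t := by
        rw [partialIsometrySwap_mul_star_mul_self hv hvv, hv_def, mul_assoc, hs, mul_one]

theorem joinedIn_unitary_one_add_conj {v x : A} (hv : v * star v * v = v) (hvv : v * v = 0)
    (hx : x ∈ unitary A) (hleft : star v * v * (x - 1) = x - 1)
    (hright : (x - 1) * (star v * v) = x - 1) :
    JoinedIn (unitary A : Set A) x (1 + v * (x - 1) * star v) := by
  have hY := joinedIn_partialIsometrySwap_one hv hvv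
  have hYY := partialIsometrySwap_mul_self hv hvv
  have hYv := partialIsometrySwap_mul_star_mul_self hv hvv
  have hvY : star v * v * partialIsometrySwap v = star v := by
    simpa [(isSelfAdjoint_partialIsometrySwap v).star_eq] using congrArg star hYv
  set Y := partialIsometrySwap v
  have hconj : Y * x * Y = 1 + v * (x - 1) * star v := by
    have hYx : Y * (x - 1) = v * (x - 1) := by
      conv_lhs => rw [← hleft, ← mul_assoc, hYv]
    have hxY : (x - 1) * Y = (x - 1) * star v := by
      conv_lhs => rw [← hright, mul_assoc, hvY]
    calc Y * x * Y = Y * Y + Y * (x - 1) * Y := by noncomm_ring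
      _ = 1 + v * (x - 1) * star v := by rw [hYY, hYx, mul_assoc, hxY, ← mul_assoc]
  have hpath := joinedIn_unitary_mul (joinedIn_unitary_mul hY (JoinedIn.refl hx)) hY
  rw [hconj, one_mul, mul_one] at hpath
  exact hpath.symm

end UnitaryPaths

section ExtendByOne

open Matrix

variable {ι κ A : Type*} [DecidableEq ι] [DecidableEq κ] [Fintype κ] [Ring A] [StarRing A]

theorem diagonal_mem_unitary {d : κ → A} (hd : ∀ i, d i ∈ unitary A) :
    diagonal d ∈ unitary (Matrix κ κ A) := by
  rw [Unitary.mem_iff, star_eq_conjTranspose, diagonal_conjTranspose, diagonal_mul_diagonal,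
    diagonal_mul_diagonal, ← diagonal_one]
  exact ⟨congrArg diagonal (funext fun i => (Unitary.mem_iff.1 (hd i)).1),
    congrArg diagonal (funext fun i => (Unitary.mem_iff.1 (hd i)).2)⟩

/-- For a matrix isometry `R`, the copy of `x` on the range of `R`, extended by the identity on the
complement of that range. -/
def extendByOne (R : Matrix ι κ A) (x : Matrix κ κ A) : Matrix ι ι A := 1 + R * (x - 1) * Rᴴ

@[simp]
theorem extendByOne_one (R : Matrix ι κ A) : extendByOne R 1 = 1 := by simp [extendByOne]

theorem star_extendByOne (R : Matrix ι κ A) (x : Matrix κ κ A) :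
    star (extendByOne R x) = extendByOne R (star x) := by
  simp [extendByOne, star_eq_conjTranspose, Matrix.mul_assoc]

theorem continuous_extendByOne [TopologicalSpace A] [IsTopologicalRing A]
    (R : Matrix ι κ A) : Continuous (extendByOne R) :=
  continuous_const.add
    ((continuous_const.matrix_mul (continuous_id.sub continuous_const)).matrix_mul
      continuous_const)

variable [Fintype ι]

theorem fromBlocks_diagonal_mem_unitary {a : Matrix ι ι A} {b : Matrix κ κ A}
    (ha : a ∈ unitary (Matrix ι ι A)) (hb : b ∈ unitary (Matrix κ κ A)) :
    fromBlocks a 0 0 b ∈ unitary (Matrix (ι ⊕ κ) (ι ⊕ κ) A) := by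
  rw [Unitary.mem_iff, star_eq_conjTranspose] at *
  simp [fromBlocks_conjTranspose, fromBlocks_multiply, ha.1, ha.2, hb.1, hb.2]

theorem extendByOne_mul {R : Matrix ι κ A} (hR : Rᴴ * R = 1) (x y : Matrix κ κ A) :
    extendByOne R x * extendByOne R y = extendByOne R (x * y) := by
  have hcross : R * (x - 1) * Rᴴ * (R * (y - 1) * Rᴴ) = R * ((x - 1) * (y - 1)) * Rᴴ := by
    calc R * (x - 1) * Rᴴ * (R * (y - 1) * Rᴴ)
        = R * (x - 1) * (Rᴴ * R) * (y - 1) * Rᴴ := by simp only [Matrix.mul_assoc]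
      _ = R * ((x - 1) * (y - 1)) * Rᴴ := by rw [hR, Matrix.mul_one, Matrix.mul_assoc R]
  rw [extendByOne, extendByOne, extendByOne, Matrix.mul_add, Matrix.add_mul, Matrix.add_mul,
    hcross, Matrix.one_mul, Matrix.mul_one, Matrix.one_mul, add_assoc, ← Matrix.add_mul,
    ← Matrix.add_mul, ← Matrix.mul_add, ← Matrix.mul_add]
  congr 3
  noncomm_ring

theorem extendByOne_mem_unitary {R : Matrix ι κ A} (hR : Rᴴ * R = 1) {x : Matrix κ κ A}
    (hx : x ∈ unitary (Matrix κ κ A)) : extendByOne R x ∈ unitary (Matrix ι ι A) := by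
  rw [Unitary.mem_iff] at hx ⊢
  rw [star_extendByOne, extendByOne_mul hR, extendByOne_mul hR, hx.1, hx.2, extendByOne_one]
  exact ⟨rfl, rfl⟩

variable [TopologicalSpace A] [IsTopologicalRing A] [Algebra ℂ A] [StarModule ℂ A]
  [ContinuousSMul ℂ A]

theorem joinedIn_fromBlocks_extendByOne_lower {R : Matrix ι κ A} (hR : Rᴴ * R = 1)
    {w : Matrix κ κ A} (hw : w ∈ unitary (Matrix κ κ A)) :
    JoinedIn (unitary (Matrix (κ ⊕ ι) (κ ⊕ ι) A) : Set (Matrix (κ ⊕ ι) (κ ⊕ ι) A))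
      (fromBlocks w 0 0 1) (fromBlocks 1 0 0 (extendByOne R w)) := by
  let v : Matrix (κ ⊕ ι) (κ ⊕ ι) A := fromBlocks 0 0 R 0
  have hvv : star v * v = fromBlocks 1 0 0 0 := by
    simp [v, star_eq_conjTranspose, fromBlocks_conjTranspose, fromBlocks_multiply, hR]
  have hw_sub : fromBlocks w 0 0 1 - 1 = (fromBlocks (w - 1) 0 0 0 : Matrix (κ ⊕ ι) (κ ⊕ ι) A) := by
    rw [sub_eq_iff_eq_add, ← fromBlocks_one, fromBlocks_add]
    simp
  have hpath := joinedIn_unitary_one_add_conj (v := v) (x := fromBlocks w 0 0 1)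
    (by simp [mul_assoc, hvv, v, fromBlocks_multiply]) (by simp [v, fromBlocks_multiply])
    (fromBlocks_diagonal_mem_unitary hw (one_mem _))
    (by simp [hvv, hw_sub, fromBlocks_multiply]) (by simp [hvv, hw_sub, fromBlocks_multiply])
  rw [hw_sub] at hpath
  simpa [v, extendByOne, star_eq_conjTranspose, fromBlocks_conjTranspose,
    fromBlocks_multiply, ← fromBlocks_one, fromBlocks_add] using hpath

theorem joinedIn_fromBlocks_extendByOne_upper {R : Matrix ι κ A} (hR : Rᴴ * R = 1)
    {w : Matrix κ κ A} (hw : w ∈ unitary (Matrix κ κ A)) :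
    JoinedIn (unitary (Matrix (ι ⊕ κ) (ι ⊕ κ) A) : Set (Matrix (ι ⊕ κ) (ι ⊕ κ) A))
      (fromBlocks 1 0 0 w) (fromBlocks (extendByOne R w) 0 0 1) := by
  let v : Matrix (ι ⊕ κ) (ι ⊕ κ) A := fromBlocks 0 R 0 0
  have hvv : star v * v = fromBlocks 0 0 0 1 := by
    simp [v, star_eq_conjTranspose, fromBlocks_conjTranspose, fromBlocks_multiply, hR]
  have hw_sub : fromBlocks 1 0 0 w - 1 = (fromBlocks 0 0 0 (w - 1) : Matrix (ι ⊕ κ) (ι ⊕ κ) A) := by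
    rw [sub_eq_iff_eq_add, ← fromBlocks_one, fromBlocks_add]
    simp
  have hpath := joinedIn_unitary_one_add_conj (v := v) (x := fromBlocks 1 0 0 w)
    (by simp [mul_assoc, hvv, v, fromBlocks_multiply]) (by simp [v, fromBlocks_multiply])
    (fromBlocks_diagonal_mem_unitary (one_mem _) hw)
    (by simp [hvv, hw_sub, fromBlocks_multiply]) (by simp [hvv, hw_sub, fromBlocks_multiply])
  rw [hw_sub] at hpath
  simpa [v, extendByOne, star_eq_conjTranspose, fromBlocks_conjTranspose,
    fromBlocks_multiply, ← fromBlocks_one, fromBlocks_add] using hpath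

end ExtendByOne

section Stabilization

open Matrix

variable {A : Type*} [Ring A]

/-- The stabilization `u ⊕ 1ₙ` of an element `u` to a matrix of size `n + 1`. -/
def stabilization (n : ℕ) (u : A) : Matrix (Fin (n + 1)) (Fin (n + 1)) A :=
  diagonal fun i => if i = 0 then u else 1

theorem stabilization_sub_one (n : ℕ) (u : A) : stabilization n u - 1 = single 0 0 (u - 1) := by
  rw [stabilization, ← diagonal_one, diagonal_sub, ← diagonal_single]
  congr 1
  ext i
  by_cases hi : i = 0 <;> simp [hi]

theorem continuous_stabilization [TopologicalSpace A] (n : ℕ) :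
    Continuous (stabilization n : A → Matrix (Fin (n + 1)) (Fin (n + 1)) A) :=
  Continuous.matrix_diagonal <| continuous_pi fun i => by split_ifs <;> fun_prop

variable [StarRing A]

theorem apply_zero_zero_mem_unitary {x : Matrix (Fin 1) (Fin 1) A}
    (hx : x ∈ unitary (Matrix (Fin 1) (Fin 1) A)) : x 0 0 ∈ unitary A := by
  rw [Unitary.mem_iff] at hx ⊢
  simpa [mul_apply, star_apply] using
    And.intro (congrFun₂ hx.1 0 0) (congrFun₂ hx.2 0 0)

theorem stabilization_mem_unitary (n : ℕ) {u : A} (hu : u ∈ unitary A) :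
    stabilization n u ∈ unitary (Matrix (Fin (n + 1)) (Fin (n + 1)) A) :=
  diagonal_mem_unitary fun i => by
    split_ifs
    exacts [hu, one_mem _]

theorem extendByOne_single (n : ℕ) (x : Matrix (Fin 1) (Fin 1) A) :
    extendByOne (single 0 0 1) x = stabilization n (x 0 0) := by
  rw [← sub_left_inj (a := 1), stabilization_sub_one, extendByOne, add_sub_cancel_left,
    conjTranspose_single, star_one, single_mul_mul_single]
  simp

theorem extendByOne_replicateRow_stabilization {n : ℕ} (V : Fin (n + 1) → A) (x : A) :
    extendByOne (replicateRow (Fin 1) V) (stabilization n x) 0 0 =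
      1 + V 0 * (x - 1) * star (V 0) := by
  simp [extendByOne, stabilization_sub_one, mul_apply, single_apply, ite_and]

theorem joinedIn_stabilization [TopologicalSpace A] (n : ℕ) {u v : A}
    (huv : JoinedIn (unitary A : Set A) u v) :
    JoinedIn (unitary (Matrix (Fin (n + 1)) (Fin (n + 1)) A) :
      Set (Matrix (Fin (n + 1)) (Fin (n + 1)) A)) (stabilization n u) (stabilization n v) :=
  (huv.map (continuous_stabilization n)).mono
    (Set.image_subset_iff.2 fun _ hu => stabilization_mem_unitary n hu)

end Stabilization

section K1

open Matrix

variable {A : Type*} [Ring A] [StarRing A] [TopologicalSpace A]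

variable (A) in
/-- K₁-injectivity: a unitary with trivial K₁-class, that is, one having a stabilization in the path
component of `1`, already lies in the path component of `1`. -/
def IsK1Injective : Prop :=
  ∀ u ∈ unitary A,
    (∃ n : ℕ, JoinedIn (unitary (Matrix (Fin (n + 1)) (Fin (n + 1)) A) :
      Set (Matrix (Fin (n + 1)) (Fin (n + 1)) A)) (stabilization n u) 1) →
    JoinedIn (unitary A : Set A) u 1

variable (A) in
/-- K₁-surjectivity: every unitary matrix is, after stabilization, joined to the stabilization of a
unitary of `A`. -/
def IsK1Surjective : Prop :=
  ∀ n : ℕ, ∀ w ∈ unitary (Matrix (Fin (n + 1)) (Fin (n + 1)) A),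
    ∃ v ∈ unitary A, ∃ m : ℕ,
      JoinedIn (unitary (Matrix (Fin (n + 1) ⊕ Fin m) (Fin (n + 1) ⊕ Fin m) A) :
          Set (Matrix (Fin (n + 1) ⊕ Fin m) (Fin (n + 1) ⊕ Fin m) A))
        (fromBlocks (stabilization n v) 0 0 1) (fromBlocks w 0 0 1)

variable [IsTopologicalRing A]

theorem OrthogonalIsometries.joinedIn_one_add_conj_of_stabilization {n : ℕ} {V : Fin (n + 1) → A}
    (hV : OrthogonalIsometries V) {x : A}
    (hx : JoinedIn (unitary (Matrix (Fin (n + 1)) (Fin (n + 1)) A) :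
      Set (Matrix (Fin (n + 1)) (Fin (n + 1)) A)) (stabilization n x) 1) :
    JoinedIn (unitary A : Set A) (1 + V 0 * (x - 1) * star (V 0)) 1 := by
  let compress (y : Matrix (Fin (n + 1)) (Fin (n + 1)) A) : A :=
    extendByOne (replicateRow (Fin 1) V) y 0 0
  have hcont : Continuous compress := (continuous_extendByOne _).matrix_elem 0 0
  have hunitary : compress '' unitary (Matrix (Fin (n + 1)) (Fin (n + 1)) A) ⊆ unitary A := by
    rintro _ ⟨y, hy, rfl⟩
    exact apply_zero_zero_mem_unitary
      (extendByOne_mem_unitary hV.conjTranspose_replicateRow_mul hy)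
  have hpath := (hx.map hcont).mono hunitary
  simpa only [compress, extendByOne_replicateRow_stabilization, extendByOne_one, one_apply_eq]
    using hpath

variable [Algebra ℂ A] [StarModule ℂ A] [ContinuousSMul ℂ A]

theorem OrthogonalIsometries.isK1Surjective {V : Fin 2 → A} (hV : OrthogonalIsometries V) :
    IsK1Surjective A := by
  intro n w hw
  have hR := (hV.pow_mul.comp_injective
    (Fin.val_injective (n := n + 1))).conjTranspose_replicateRow_mul
  have hv := extendByOne_mem_unitary hR hw
  set v := extendByOne (replicateRow (Fin 1) _) w
  let E : Matrix (Fin (n + 1)) (Fin 1) A := single 0 0 1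
  have hE : Eᴴ * E = 1 := by
    ext i j
    fin_cases i, j
    simp [E]
  have hcorner := joinedIn_fromBlocks_extendByOne_upper hE hv
  rw [extendByOne_single] at hcorner
  exact ⟨v 0 0, apply_zero_zero_mem_unitary hv, 1,
    ((joinedIn_fromBlocks_extendByOne_lower hR hw).trans hcorner).symm⟩

theorem exists_joinedIn_mul_eq_self {S T u : A} (hS : star S * S = 1) (hT : star T * T = 1)
    (hST : star S * T = 0) (hu : u ∈ unitary A) (hSuT : star S * u * T = 0) :
    ∃ x : A, JoinedIn (unitary A : Set A) x u ∧ x * T = T := by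
  have huT : star (u * T) * (u * T) = 1 := by
    rw [star_mul, mul_assoc, ← mul_assoc (star u), (Unitary.mem_iff.1 hu).1, one_mul, hT]
  have huTS : star (u * T) * S = 0 := by
    rw [← star_star S, ← star_mul, ← mul_assoc, hSuT, star_zero]
  obtain ⟨y, hy, hyuT⟩ := exists_joinedIn_one_mul_eq huT hS huTS
  obtain ⟨z, hz, hzS⟩ := exists_joinedIn_one_mul_eq hS hT hST
  refine ⟨z * y * u, ?_, by rw [mul_assoc, mul_assoc, hyuT, hzS]⟩
  simpa using joinedIn_unitary_mul (joinedIn_unitary_mul hz hy) (JoinedIn.refl hu)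

theorem joinedIn_one_add_conj_of_mul_eq_self {T W x : A} (hT : star T * T = 1)
    (hW : star W * W = 1) (hTW : T * star T * W = W) (hx : x ∈ unitary A) (hxT : x * T = T) :
    JoinedIn (unitary A : Set A) x (1 + W * (x - 1) * star W) := by
  have hTx : star T * x = star T := by
    have hxT' : star x * T = T := by
      conv_lhs => rw [← hxT, ← mul_assoc, (Unitary.mem_iff.1 hx).1, one_mul]
    simpa using congrArg star hxT'
  set q := 1 - T * star T with hq
  have hq_star : star q = q := by simp [hq]
  have hq_idem : q * q = q := by
    rw [hq]
    linear_combination (norm := noncomm_ring) T * hT * star T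
  have hqx : q * (x - 1) = x - 1 := by
    rw [hq]
    linear_combination (norm := noncomm_ring) -(T * hTx)
  have hxq : (x - 1) * q = x - 1 := by
    rw [hq]
    linear_combination (norm := noncomm_ring) -(hxT * star T)
  have hqW : q * W = 0 := by rw [hq, sub_mul, one_mul, hTW, sub_self]
  have hv : star (W * q) * (W * q) = q := by
    rw [star_mul, hq_star, mul_assoc, ← mul_assoc (star W), hW, one_mul, hq_idem]
  have hpath := joinedIn_unitary_one_add_conj (v := W * q) (x := x)
    (by rw [mul_assoc, hv, mul_assoc, hq_idem])
    (by rw [mul_assoc, ← mul_assoc q, hqW, zero_mul, mul_zero]) hx (by rw [hv, hqx])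
    (by rw [hv, hxq])
  rwa [star_mul, hq_star, ← mul_assoc, mul_assoc W q, hqx, mul_assoc W (x - 1), hxq] at hpath

theorem isK1Injective_of_exists_orthogonalIsometries
    (h : ∀ u ∈ unitary A, ∃ V : Fin 2 → A,
      OrthogonalIsometries V ∧ star (V 0) * u * V 1 = 0) : IsK1Injective A := by
  rintro u hu ⟨n, hn⟩
  obtain ⟨V, hV, hVu⟩ := h u hu
  have hT := hV.star_mul_self 1
  obtain ⟨x, hxu, hxT⟩ := exists_joinedIn_mul_eq_self (hV.star_mul_self 0) hT
    (hV.star_mul_of_ne zero_ne_one) hu hVu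
  have hW : OrthogonalIsometries fun i : Fin (n + 1) => V 1 * (V 1 ^ (i : ℕ) * V 0) :=
    (hV.pow_mul.comp_injective Fin.val_injective).const_mul hT
  have hTW : V 1 * star (V 1) * (V 1 * (V 1 ^ 0 * V 0)) = V 1 * (V 1 ^ 0 * V 0) := by
    rw [mul_assoc, ← mul_assoc (star (V 1)), hT, one_mul]
  have hx_compressed := joinedIn_one_add_conj_of_mul_eq_self hT (hW.star_mul_self 0) hTW
    hxu.source_mem hxT
  have hcompressed_one :=
    hW.joinedIn_one_add_conj_of_stabilization ((joinedIn_stabilization n hxu).trans hn)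
  exact hxu.symm.trans (hx_compressed.trans hcompressed_one)

end K1

section SigmaUnital

open Filter Topology

theorem tendsto_mul_of_mem_closure {B : Type*} [NonUnitalNormedRing B] {f : ℕ → B}
    (hf : ∀ N, ‖f N‖ ≤ 1) {s : Set B} (hs : ∀ c ∈ s, Tendsto (fun N => f N * c) atTop (𝓝 c))
    {b : B} (hb : b ∈ closure s) : Tendsto (fun N => f N * b) atTop (𝓝 b) := by
  rw [Metric.tendsto_nhds]
  intro ε hε
  obtain ⟨c, hc, hbc⟩ := Metric.mem_closure_iff.1 hb (ε / 3) (by positivity)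
  filter_upwards [Metric.tendsto_nhds.1 (hs c hc) (ε / 3) (by positivity)] with N hN
  have hfbc : dist (f N * b) (f N * c) ≤ dist b c := by
    rw [dist_eq_norm, dist_eq_norm, ← mul_sub]
    exact (norm_mul_le _ _).trans (mul_le_of_le_one_left (norm_nonneg _) (hf N))
  have htri := dist_triangle4 (f N * b) (f N * c) c b
  rw [dist_comm c b] at htri
  linarith

variable {B : Type*} [NonUnitalCStarAlgebra B]

theorem exists_ge_forall_norm_mul_sub_lt [PartialOrder B] [StarOrderedRing B] {e : B} (he : 0 ≤ e)
    (he_lt : ‖e‖ < 1) {s : Set B} (hs : s.Finite) {ε : ℝ} (hε : 0 < ε) :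
    ∃ f : B, e ≤ f ∧ ‖f‖ < 1 ∧ ∀ c ∈ s, ‖f * c - c‖ < ε := by
  have hbasis := CStarAlgebra.hasBasis_approximateUnit B
  have hge : ∀ᶠ f in CStarAlgebra.approximateUnit B, e ≤ f :=
    hbasis.eventually_iff.2 ⟨e, ⟨he, he_lt⟩, fun _ hf => hf.1⟩
  have happrox : ∀ᶠ f in CStarAlgebra.approximateUnit B, ∀ c ∈ s, ‖f * c - c‖ < ε := by
    refine (eventually_all_finite hs).2 fun c _ => ?_
    simpa only [dist_eq_norm] using Metric.tendsto_nhds.1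
      ((CStarAlgebra.increasingApproximateUnit B).tendsto_mul_right c) ε hε
  obtain ⟨f, hf, hfe⟩ := hbasis.eventually_iff.1 (hge.and happrox)
  have hf_mem := hfe ⟨le_rfl, mem_closedBall_zero_iff.2 hf.2.le⟩
  exact ⟨f, hf_mem.1, hf.2, hf_mem.2⟩

theorem exists_monotone_tendsto_mul [PartialOrder B] [StarOrderedRing B] (c : ℕ → B) :
    ∃ f : ℕ → B, f 0 = 0 ∧ Monotone f ∧ (∀ N, ‖f N‖ < 1) ∧
      ∀ i, Tendsto (fun N => f N * c i) atTop (𝓝 (c i)) := by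
  let X := {e : B // 0 ≤ e ∧ ‖e‖ < 1}
  have hstep (N : ℕ) (e : X) : ∃ f : X, e.1 ≤ f.1 ∧
      ∀ b ∈ c '' Set.Iic N, ‖f.1 * b - b‖ < 1 / (N + 1 : ℝ) := by
    obtain ⟨f, hef, hf, happrox⟩ := exists_ge_forall_norm_mul_sub_lt e.2.1 e.2.2
      ((Set.finite_Iic N).image c) (Nat.one_div_pos_of_nat (n := N))
    exact ⟨⟨f, e.2.1.trans hef, hf⟩, hef, happrox⟩
  choose next hle happrox using hstep
  let f (n : ℕ) : X := Nat.rec ⟨0, le_rfl, by simp⟩ next n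
  refine ⟨fun n => (f n).1, rfl, monotone_nat_of_le_succ fun n => hle n (f n), fun n => (f n).2.2,
    fun i => ?_⟩
  rw [← tendsto_add_atTop_iff_nat 1, tendsto_iff_norm_sub_tendsto_zero]
  refine squeeze_zero' (.of_forall fun _ => norm_nonneg _) ?_
    (tendsto_one_div_add_atTop_nhds_zero_nat (𝕜 := ℝ))
  filter_upwards [eventually_ge_atTop i] with n hn
  exact (happrox n (f n) _ ⟨i, hn, rfl⟩).le

theorem exists_sum_star_mul_self_tendsto (c : ℕ → B) :
    ∃ d : ℕ → B, (∀ N, ‖∑ n ∈ Finset.range N, star (d n) * d n‖ ≤ 1) ∧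
      ∀ i, Tendsto (fun N => (∑ n ∈ Finset.range N, star (d n) * d n) * c i) atTop (𝓝 (c i)) := by
  let _ : PartialOrder B := CStarAlgebra.spectralOrder B
  have : StarOrderedRing B := CStarAlgebra.spectralOrderedRing B
  obtain ⟨f, hf_zero, hf_mono, hf_norm, hf⟩ := exists_monotone_tendsto_mul c
  let d (n : ℕ) : B := CFC.sqrt (f (n + 1) - f n)
  have hd (n : ℕ) : star (d n) * d n = f (n + 1) - f n := by
    rw [(IsSelfAdjoint.of_nonneg (CFC.sqrt_nonneg _)).star_eq,
      CFC.sqrt_mul_sqrt_self _ (sub_nonneg.2 (hf_mono n.le_succ))]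
  have hsum (N : ℕ) : ∑ n ∈ Finset.range N, star (d n) * d n = f N := by
    simp only [hd, Finset.sum_range_sub, hf_zero, sub_zero]
  exact ⟨d, fun N => hsum N ▸ (hf_norm N).le, fun i => by simpa only [hsum] using hf i⟩

variable (B) in
/-- `B` is σ-unital: it has a sequential approximate unit. Neither boundedness nor positivity is
imposed, and the sequence need only be a unit on the left. -/
def IsSigmaUnital : Prop := ∃ e : ℕ → B, ∀ b, Tendsto (fun n => e n * b) atTop (𝓝 b)

variable (B) in
theorem isSigmaUnital_of_separableSpace [TopologicalSpace.SeparableSpace B] : IsSigmaUnital B := by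
  obtain ⟨d, hd_norm, hd⟩ := exists_sum_star_mul_self_tendsto (TopologicalSpace.denseSeq B)
  exact ⟨_, fun b => tendsto_mul_of_mem_closure hd_norm (Set.forall_mem_range.2 hd)
    (TopologicalSpace.denseRange_denseSeq B b)⟩

/-- The partial sums of `star (d n) * d n` form an approximate unit in the unit ball. Such a `d`
supplies the weights that turn orthogonal isometries `s n` into an isometry `∑ s n * d n`. -/
structure IsSquareSumUnit (d : ℕ → B) : Prop where
  norm_sum_le (N : ℕ) : ‖∑ n ∈ Finset.range N, star (d n) * d n‖ ≤ 1
  tendsto_sum_mul (b : B) :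
    Tendsto (fun N => (∑ n ∈ Finset.range N, star (d n) * d n) * b) atTop (𝓝 b)

theorem IsSigmaUnital.exists_isSquareSumUnit (hB : IsSigmaUnital B) :
    ∃ d : ℕ → B, IsSquareSumUnit d := by
  obtain ⟨e, he⟩ := hB
  obtain ⟨d, hd_norm, hd⟩ := exists_sum_star_mul_self_tendsto e
  refine ⟨d, hd_norm, fun b => tendsto_mul_of_mem_closure hd_norm
    (s := Set.range fun i => e i * b) (Set.forall_mem_range.2 fun i => ?_)
    (mem_closure_of_tendsto (he b) (.of_forall fun i => ⟨i, rfl⟩))⟩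
  simpa only [mul_assoc] using (hd i).mul_const b

end SigmaUnital

section Multiplier

open Filter Topology

variable {B : Type*} [NonUnitalCStarAlgebra B]

theorem eq_of_forall_mul_eq {a b : B} (h : ∀ y, y * a = y * b) : a = b := by
  have hzero : star (a - b) * (a - b) = 0 := by rw [mul_sub, h, sub_self]
  exact sub_eq_zero.1 ((CStarRing.star_mul_self_eq_zero_iff _).1 hzero)

theorem eq_of_forall_eq_mul {a b : B} (h : ∀ y, a * y = b * y) : a = b := by
  have hzero : (a - b) * star (a - b) = 0 := by rw [sub_mul, h, sub_self]
  exact sub_eq_zero.1 ((CStarRing.mul_star_self_eq_zero_iff _).1 hzero)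

theorem multiplier_coe_mul (a b : B) : ((a * b : B) : 𝓜(ℂ, B)) = a * b :=
  map_mul (DoubleCentralizer.coeHom (𝕜 := ℂ)) a b

theorem multiplier_coe_star (a : B) : ((star a : B) : 𝓜(ℂ, B)) = star (a : 𝓜(ℂ, B)) :=
  map_star (DoubleCentralizer.coeHom (𝕜 := ℂ)) a

theorem multiplier_coe_sum {ι : Type*} (s : Finset ι) (f : ι → B) :
    ((∑ i ∈ s, f i : B) : 𝓜(ℂ, B)) = ∑ i ∈ s, (f i : 𝓜(ℂ, B)) :=
  map_sum (DoubleCentralizer.coeHom (𝕜 := ℂ)) f s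

variable (B) in
theorem isometry_multiplier_coe : Isometry fun b : B => (b : 𝓜(ℂ, B)) :=
  NonUnitalStarAlgHom.isometry (DoubleCentralizer.coeHom (𝕜 := ℂ) (A := B)) fun _ _ hab =>
    eq_of_forall_eq_mul fun y => congrArg (fun m : 𝓜(ℂ, B) => m.fst y) hab

theorem norm_multiplier_coe (b : B) : ‖(b : 𝓜(ℂ, B))‖ = ‖b‖ :=
  (isometry_multiplier_coe B).norm_map_of_map_zero (map_zero DoubleCentralizer.coeHom) b

theorem multiplier_mul_coe (m : 𝓜(ℂ, B)) (b : B) : m * b = (m.fst b : 𝓜(ℂ, B)) := by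
  refine DoubleCentralizer.ext _ _ _ _ (Prod.ext ?_ ?_)
  · ext x
    refine eq_of_forall_mul_eq fun y => ?_
    change y * m.fst (b * x) = y * (m.fst b * x)
    rw [← m.central, ← mul_assoc, m.central, mul_assoc]
  · ext x
    exact m.central x b

theorem multiplier_coe_mul_eq_coe (m : 𝓜(ℂ, B)) (b : B) : b * m = (m.snd b : 𝓜(ℂ, B)) := by
  refine DoubleCentralizer.ext _ _ _ _ (Prod.ext ?_ ?_)
  · ext x
    exact (m.central b x).symm
  · ext x
    refine eq_of_forall_eq_mul fun y => ?_
    change m.snd (x * b) * y = x * m.snd b * y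
    rw [m.central, mul_assoc, ← m.central, mul_assoc]

theorem eq_of_forall_coe_mul_mul_coe {x y : 𝓜(ℂ, B)}
    (h : ∀ a b : B, a * x * b = (a * y * b : 𝓜(ℂ, B))) : x = y := by
  have hfst (b : B) : x.fst b = y.fst b := eq_of_forall_mul_eq fun a => by
    apply (isometry_multiplier_coe B).injective
    simpa only [multiplier_coe_mul, ← multiplier_mul_coe, mul_assoc] using h a b
  refine DoubleCentralizer.ext _ _ _ _ (Prod.ext (ContinuousLinearMap.ext hfst) ?_)
  ext a
  exact eq_of_forall_eq_mul fun b => by rw [x.central, y.central, hfst]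

/-- Convergence of a sequence of multipliers in the strict topology of `𝓜(ℂ, B)`. -/
def StrictTendsto (T : ℕ → 𝓜(ℂ, B)) (t : 𝓜(ℂ, B)) : Prop :=
  ∀ b : B, Tendsto (fun N => T N * b) atTop (𝓝 (t * b)) ∧
    Tendsto (fun N => (b : 𝓜(ℂ, B)) * T N) atTop (𝓝 (b * t))

theorem exists_strictTendsto_of_cauchySeq {T : ℕ → 𝓜(ℂ, B)}
    (hleft : ∀ b : B, CauchySeq fun N => T N * (b : 𝓜(ℂ, B)))
    (hright : ∀ b : B, CauchySeq fun N => (b : 𝓜(ℂ, B)) * T N) : ∃ t, StrictTendsto T t := by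
  have hcoe := (isometry_multiplier_coe B).isUniformInducing
  simp only [multiplier_mul_coe] at hleft
  simp only [multiplier_coe_mul_eq_coe] at hright
  choose f hf using fun b => cauchySeq_tendsto_of_complete (hcoe.cauchy_map_iff.1 (hleft b))
  choose g hg using fun b => cauchySeq_tendsto_of_complete (hcoe.cauchy_map_iff.1 (hright b))
  have hcentral (x y : B) : g x * y = x * f y :=
    tendsto_nhds_unique ((hg x).mul_const y)
      (((hf y).const_mul x).congr fun N => ((T N).central x y).symm)
  let t : 𝓜(ℂ, B) :=
    { fst := continuousLinearMapOfTendsto (fun N => (T N).fst) (tendsto_pi_nhds.2 hf)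
      snd := continuousLinearMapOfTendsto (fun N => (T N).snd) (tendsto_pi_nhds.2 hg)
      central := hcentral }
  have hcont := (isometry_multiplier_coe B).continuous
  refine ⟨t, fun b => ?_⟩
  simp only [multiplier_mul_coe, multiplier_coe_mul_eq_coe]
  exact ⟨(hcont.tendsto _).comp (hf b), (hcont.tendsto _).comp (hg b)⟩

theorem StrictTendsto.star_mul_mul_eq {S T : ℕ → 𝓜(ℂ, B)} {r t x y : 𝓜(ℂ, B)}
    (hS : StrictTendsto S r) (hT : StrictTendsto T t)
    (hy : ∀ a b : B, Tendsto (fun N => a * (star (S N) * x * T N) * (b : 𝓜(ℂ, B))) atTop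
      (𝓝 (a * y * b))) : star r * x * t = y := by
  refine eq_of_forall_coe_mul_mul_coe fun a b => tendsto_nhds_unique ?_ (hy a b)
  have hstar : Tendsto (fun N => a * star (S N)) atTop (𝓝 (a * star r : 𝓜(ℂ, B))) := by
    simpa [multiplier_coe_star] using (hS (star a)).1.star
  simpa only [mul_assoc] using (hstar.mul_const x).mul (hT b).1

end Multiplier

section CStarAlgebra

open Filter Topology

theorem norm_mul_of_star_mul_self {M : Type*} [CStarAlgebra M] {T : M} (hT : star T * T = 1)
    (x : M) : ‖T * x‖ = ‖x‖ := by
  have hsq : ‖T * x‖ * ‖T * x‖ = ‖x‖ * ‖x‖ := by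
    rw [← CStarRing.norm_star_mul_self, ← CStarRing.norm_star_mul_self, star_mul, mul_assoc,
      ← mul_assoc (star T), hT, one_mul]
  exact (mul_self_inj (norm_nonneg _) (norm_nonneg _)).1 hsq

namespace OrthogonalIsometries

theorem star_sum_mul_sum {ι A : Type*} [Ring A] [StarRing A] {V : ι → A}
    (hV : OrthogonalIsometries V) (a : ι → A) (I : Finset ι) :
    star (∑ i ∈ I, V i * a i) * ∑ i ∈ I, V i * a i = ∑ i ∈ I, star (a i) * a i := by
  rw [star_sum, Finset.sum_mul_sum]
  refine Finset.sum_congr rfl fun i hi => ?_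
  rw [Finset.sum_eq_single_of_mem i hi fun j _ hji => ?_]
  · rw [star_mul, mul_assoc, ← mul_assoc (star (V i)), hV.star_mul_self, one_mul]
  · rw [star_mul, mul_assoc, ← mul_assoc (star (V i)), hV.star_mul_of_ne hji.symm, zero_mul,
      mul_zero]

variable {M : Type*} [CStarAlgebra M] {V : ℕ → M}

theorem tendsto_star_mul_zero (hV : OrthogonalIsometries V) {b : M}
    (hb : Tendsto (fun N => (∑ n ∈ Finset.range N, V n * star (V n)) * b) atTop (𝓝 b)) :
    Tendsto (fun n => star (V n) * b) atTop (𝓝 0) := by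
  have hdiff := (((tendsto_add_atTop_iff_nat 1).2 hb).sub hb).norm
  simp only [Finset.sum_range_succ, add_mul, add_sub_cancel_left, sub_self, norm_zero] at hdiff
  refine tendsto_zero_iff_norm_tendsto_zero.2 (hdiff.congr fun n => ?_)
  rw [mul_assoc, norm_mul_of_star_mul_self (hV.star_mul_self n)]

theorem norm_sum_mul_sq (hV : OrthogonalIsometries V) (a : ℕ → M) (I : Finset ℕ) :
    ‖∑ n ∈ I, V n * a n‖ ^ 2 = ‖∑ n ∈ I, star (a n) * a n‖ := by
  rw [sq, ← CStarRing.norm_star_mul_self, hV.star_sum_mul_sum]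

theorem cauchySeq_sum_mul (hV : OrthogonalIsometries V) {a : ℕ → M} {b : M}
    (hb : CauchySeq fun N => (∑ n ∈ Finset.range N, star (a n) * a n) * b) :
    CauchySeq fun N => (∑ n ∈ Finset.range N, V n * a n) * b := by
  rw [Metric.cauchySeq_iff'] at hb ⊢
  intro ε hε
  obtain ⟨L, hL⟩ := hb (ε ^ 2 / (‖b‖ + 1)) (by positivity)
  refine ⟨L, fun N hN => ?_⟩
  have hLN := hL N hN
  rw [dist_eq_norm, ← sub_mul, ← Finset.sum_Ico_eq_sub _ hN] at hLN ⊢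
  have hsq : ‖(∑ n ∈ Finset.Ico L N, V n * a n) * b‖ ^ 2 ≤
      ‖b‖ * ‖(∑ n ∈ Finset.Ico L N, star (a n) * a n) * b‖ := by
    rw [sq, ← CStarRing.norm_star_mul_self, star_mul, mul_assoc, ← mul_assoc (star (∑ n ∈ _, _)),
      hV.star_sum_mul_sum, ← norm_star b]
    exact norm_mul_le _ _
  rw [lt_div_iff₀ (by positivity)] at hLN
  refine lt_of_pow_lt_pow_left₀ 2 hε.le (hsq.trans_lt ?_)
  linarith [norm_nonneg ((∑ n ∈ Finset.Ico L N, star (a n) * a n) * b)]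

theorem cauchySeq_mul_sum_comp (hV : OrthogonalIsometries V) {φ : ℕ → ℕ} (hφ : StrictMono φ)
    {a : ℕ → M} (ha : ∀ N, ‖∑ n ∈ Finset.range N, star (a n) * a n‖ ≤ 1) {b : M}
    (hb : Tendsto (fun N => b * ∑ n ∈ Finset.range N, V n * star (V n)) atTop (𝓝 b)) :
    CauchySeq fun N => b * ∑ n ∈ Finset.range N, V (φ n) * a n := by
  set P : ℕ → M := fun N => ∑ n ∈ Finset.range N, V n * star (V n)
  set T : ℕ → M := fun N => ∑ n ∈ Finset.range N, V (φ n) * a n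
  have hT (N : ℕ) : ‖T N‖ ≤ 1 := by
    rw [← sq_le_one_iff₀ (norm_nonneg _)]
    exact ((hV.comp_injective hφ.injective).norm_sum_mul_sq a _).trans_le (ha N)
  have hPT {L N : ℕ} (hLN : L ≤ N) : P L * (T N - T L) = 0 := by
    rw [← Finset.sum_Ico_eq_sub _ hLN, Finset.sum_mul_sum]
    refine Finset.sum_eq_zero fun i hi => Finset.sum_eq_zero fun j hj => ?_
    have hij : i < φ j :=
      (Finset.mem_range.1 hi).trans_le ((Finset.mem_Ico.1 hj).1.trans (hφ.le_apply))
    rw [mul_assoc, ← mul_assoc (star (V i)), hV.star_mul_of_ne hij.ne, zero_mul, mul_zero]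
  rw [Metric.cauchySeq_iff']
  intro ε hε
  obtain ⟨L, hL⟩ := (Metric.tendsto_nhds.1 hb (ε / 2) (by positivity)).exists
  rw [dist_comm, dist_eq_norm] at hL
  refine ⟨L, fun N hN => ?_⟩
  have hTT : ‖T N - T L‖ ≤ 2 := (norm_sub_le _ _).trans (by linarith [hT N, hT L])
  calc dist (b * T N) (b * T L) = ‖(b - b * P L) * (T N - T L)‖ := by
        rw [dist_eq_norm, sub_mul, mul_assoc b (P L), hPT hN, mul_zero, sub_zero, mul_sub]
    _ ≤ ‖b - b * P L‖ * 2 := (norm_mul_le _ _).trans (by gcongr)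
    _ < ε := by linarith

end OrthogonalIsometries

end CStarAlgebra

section Decoupling

open Filter Topology

theorem exists_strictMono_forall_lt {P : ℕ → ℕ → ℕ → Prop}
    (h : ∀ n a, ∀ᶠ m in atTop, P n a m) :
    ∃ φ : ℕ → ℕ, StrictMono φ ∧ ∀ k n, k < n → P n (φ k) (φ n) := by
  have hstep (n x : ℕ) : ∃ y, x < y ∧ ∀ a ≤ x, P (n + 1) a y :=
    ((eventually_gt_atTop x).and
      ((eventually_all_finite (Set.finite_Iic x)).2 fun a _ => h (n + 1) a)).exists
  choose next hlt hnext using hstep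
  let φ : ℕ → ℕ := fun n => Nat.rec 0 next n
  have hφ : StrictMono φ := strictMono_nat_of_lt_succ fun n => hlt n (φ n)
  refine ⟨φ, hφ, fun k n hkn => ?_⟩
  obtain ⟨n, rfl⟩ := Nat.exists_eq_succ_of_ne_zero (Nat.ne_zero_of_lt hkn)
  exact hnext n (φ n) (φ k) (hφ.monotone (Nat.lt_succ_iff.1 hkn))

theorem exists_strictMono_norm_star_mul_mul_le {M : Type*} [NormedRing M] [StarRing M]
    [NormedStarGroup M] {s d : ℕ → M}
    (hs : ∀ i x, Tendsto (fun n => star (s n) * (x * d i)) atTop (𝓝 0)) (X : ℕ → M) :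
    ∃ φ : ℕ → ℕ, StrictMono φ ∧ ∀ k l, k ≠ l → ∀ i ≤ max k l, ∀ j ≤ max k l, ∀ q ≤ max k l,
      ‖star (s (φ k) * d i) * X q * (s (φ l) * d j)‖ ≤ (1 / 2) ^ max k l := by
  have hsmall (x : M) (a i j n : ℕ) :
      ∀ᶠ m in atTop, ‖star (s m * d i) * x * (s a * d j)‖ ≤ (1 / 2) ^ n := by
    have htendsto := ((hs j (x * s a)).const_mul (star (d i))).norm
    rw [mul_zero, norm_zero] at htendsto
    filter_upwards [htendsto.eventually_le_const (by positivity : (0 : ℝ) < (1 / 2) ^ n)] with m hm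
    simpa only [star_mul, mul_assoc] using hm
  obtain ⟨φ, hφ, hφ_le⟩ := exists_strictMono_forall_lt (P := fun n a m =>
      ∀ i ∈ Set.Iic n, ∀ j ∈ Set.Iic n, ∀ q ∈ Set.Iic n,
        ‖star (s m * d i) * X q * (s a * d j)‖ ≤ (1 / 2) ^ n ∧
        ‖star (s m * d i) * star (X q) * (s a * d j)‖ ≤ (1 / 2) ^ n) fun n a => by
    simp only [eventually_all_finite (Set.finite_Iic n)]
    exact fun i _ j _ q _ => (hsmall (X q) a i j n).and (hsmall (star (X q)) a i j n)
  refine ⟨φ, hφ, fun k l hkl i hi j hj q hq => ?_⟩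
  rcases hkl.lt_or_gt with hlt | hlt
  · rw [max_eq_right hlt.le] at hi hj hq ⊢
    rw [← norm_star]
    simpa only [star_mul, star_star, mul_assoc] using (hφ_le k l hlt j hj i hi q hq).2
  · rw [max_eq_left hlt.le] at hi hj hq ⊢
    exact (hφ_le l k hlt i hi j hj q hq).1

theorem summable_of_norm_le_half_pow_max {E : Type*} [NormedAddCommGroup E] [CompleteSpace E]
    {e : ℕ × ℕ → E} {q : ℕ}
    (he : ∀ i j, q ≤ max (2 * i) (2 * j + 1) → ‖e (i, j)‖ ≤ (1 / 2) ^ max (2 * i) (2 * j + 1)) :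
    Summable e := by
  refine (summable_geometric_two.mul_of_nonneg summable_geometric_two
    (fun _ => by positivity) fun _ => by positivity).of_norm_bounded_eventually ?_
  refine ((Finset.range q ×ˢ Finset.range q).finite_toSet.subset fun p hp => ?_)
  by_contra hq
  simp only [Finset.coe_product, Set.mem_prod, Finset.mem_coe, Finset.mem_range] at hq
  refine hp ((he p.1 p.2 (by lia)).trans ?_)
  rw [← pow_add]
  exact pow_le_pow_of_le_one (by norm_num) (by norm_num) (by lia)

end Decoupling

section StableMultiplier

open Filter Topology

variable {B : Type*} [NonUnitalCStarAlgebra B] {d : ℕ → B} {s : ℕ → 𝓜(ℂ, B)}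

theorem exists_isometry_strictTendsto_sum_mul (hd : IsSquareSumUnit d)
    (hs : OrthogonalIsometries s)
    (hs_sum : ∀ b : B, Tendsto
      (fun N => (∑ n ∈ Finset.range N, s n * star (s n)) * (b : 𝓜(ℂ, B))) atTop (𝓝 b))
    {φ : ℕ → ℕ} (hφ : StrictMono φ) :
    ∃ t, star t * t = 1 ∧
      StrictTendsto (fun N => ∑ n ∈ Finset.range N, s (φ n) * (d n : 𝓜(ℂ, B))) t := by
  have hsφ := hs.comp_injective hφ.injective
  have hcoe (N : ℕ) : ∑ n ∈ Finset.range N, star (d n : 𝓜(ℂ, B)) * d n =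
      ((∑ n ∈ Finset.range N, star (d n) * d n : B) : 𝓜(ℂ, B)) := by
    simp only [multiplier_coe_sum, multiplier_coe_mul, multiplier_coe_star]
  have hd_tendsto (b : B) : Tendsto
      (fun N => (∑ n ∈ Finset.range N, star (d n : 𝓜(ℂ, B)) * d n) * (b : 𝓜(ℂ, B))) atTop
      (𝓝 b) := by
    simp only [hcoe, ← multiplier_coe_mul]
    exact ((isometry_multiplier_coe B).continuous.tendsto b).comp (hd.tendsto_sum_mul b)
  have hd_norm (N : ℕ) : ‖∑ n ∈ Finset.range N, star (d n : 𝓜(ℂ, B)) * d n‖ ≤ 1 := by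
    rw [hcoe, norm_multiplier_coe]
    exact hd.norm_sum_le N
  have hs_sum_right (b : B) : Tendsto
      (fun N => (b : 𝓜(ℂ, B)) * ∑ n ∈ Finset.range N, s n * star (s n)) atTop (𝓝 b) := by
    simpa [multiplier_coe_star] using (hs_sum (star b)).star
  obtain ⟨t, ht⟩ := exists_strictTendsto_of_cauchySeq
    (fun b => hsφ.cauchySeq_sum_mul (hd_tendsto b).cauchySeq)
    (fun b => hs.cauchySeq_mul_sum_comp hφ hd_norm (hs_sum_right b))
  refine ⟨t, ?_, ht⟩
  rw [← mul_one (star t)]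
  refine ht.star_mul_mul_eq ht fun a b =>
    ((hd_tendsto b).const_mul (a : 𝓜(ℂ, B))).congr fun N => ?_
  rw [mul_one, hsφ.star_sum_mul_sum, mul_assoc]

theorem inCanonicalIdeal_of_hasSum {ι : Type*} {e : ι → 𝓜(ℂ, B)} {y : 𝓜(ℂ, B)} (hy : HasSum e y)
    (he : ∀ i, inCanonicalIdeal (e i)) : inCanonicalIdeal y := by
  choose b hb using he
  refine (isometry_multiplier_coe B).isClosedEmbedding.isClosed_range.mem_of_tendsto hy
    (Eventually.of_forall fun I => ⟨∑ i ∈ I, b i, ?_⟩)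
  simp only [multiplier_coe_sum, hb]

theorem StrictTendsto.star_mul_mul_eq_of_hasSum {v w : ℕ → 𝓜(ℂ, B)} {r t x y : 𝓜(ℂ, B)}
    (hr : StrictTendsto (fun N => ∑ n ∈ Finset.range N, v n) r)
    (ht : StrictTendsto (fun N => ∑ n ∈ Finset.range N, w n) t)
    (hy : HasSum (fun p : ℕ × ℕ => star (v p.1) * x * w p.2) y) : star r * x * t = y := by
  have hsquares : Tendsto (fun N => Finset.range N ×ˢ Finset.range N) atTop atTop :=
    tendsto_finsetProd_atTop.comp (tendsto_atTop_diagonal.comp tendsto_finset_range)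
  refine hr.star_mul_mul_eq ht fun a b => ?_
  have hlim := ((hy.comp hsquares).const_mul (a : 𝓜(ℂ, B))).mul_const (b : 𝓜(ℂ, B))
  refine hlim.congr fun N => ?_
  simp only [Function.comp_apply, Finset.sum_product_right, star_sum, Finset.sum_mul,
    Finset.mul_sum]

theorem IsStable.exists_orthogonalIsometries (h : IsStable B) :
    ∃ s : ℕ → 𝓜(ℂ, B), OrthogonalIsometries s ∧
      ∀ b : B, Tendsto (fun N => (∑ n ∈ Finset.range N, s n * star (s n)) * (b : 𝓜(ℂ, B))) atTop
        (𝓝 b) := by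
  obtain ⟨s, hs_self, hs_ne, hs_sum⟩ := h
  exact ⟨s, ⟨hs_self, hs_ne _ _⟩, hs_sum⟩

theorem exists_orthogonalIsometries_inCanonicalIdeal (hB : IsSigmaUnital B) (hstable : IsStable B)
    (X : ℕ → 𝓜(ℂ, B)) :
    ∃ V : Fin 2 → 𝓜(ℂ, B), OrthogonalIsometries V ∧
      ∀ q, inCanonicalIdeal (star (V 0) * X q * V 1) := by
  obtain ⟨d, hd⟩ := hB.exists_isSquareSumUnit
  obtain ⟨s, hs, hs_sum⟩ := hstable.exists_orthogonalIsometries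
  obtain ⟨φ, hφ, hφ_le⟩ := exists_strictMono_norm_star_mul_mul_le (s := s)
    (d := fun n => (d n : 𝓜(ℂ, B)))
    (fun i x => by simpa only [multiplier_mul_coe] using hs.tendsto_star_mul_zero (hs_sum _)) X
  have heven : StrictMono fun n : ℕ => φ (2 * n) := hφ.comp fun _ _ h => by lia
  have hodd : StrictMono fun n : ℕ => φ (2 * n + 1) := hφ.comp fun _ _ h => by lia
  obtain ⟨r, hr_isometry, hr⟩ := exists_isometry_strictTendsto_sum_mul hd hs hs_sum heven
  obtain ⟨t, ht_isometry, ht⟩ := exists_isometry_strictTendsto_sum_mul hd hs hs_sum hodd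
  have hrt : star r * t = 0 := by
    rw [← mul_one (star r)]
    refine hr.star_mul_mul_eq_of_hasSum ht (hasSum_zero.congr_fun fun p => ?_)
    rw [mul_one, star_mul, mul_assoc, ← mul_assoc (star (s _)),
      hs.star_mul_of_ne (hφ.injective.ne (by lia)), zero_mul, mul_zero]
  refine ⟨![r, t], .of_star_mul_eq_zero hr_isometry ht_isometry hrt, fun q => ?_⟩
  have hsum := (summable_of_norm_le_half_pow_max (q := q)
    (e := fun p => star (s (φ (2 * p.1)) * (d p.1 : 𝓜(ℂ, B))) * X q *
      (s (φ (2 * p.2 + 1)) * (d p.2 : 𝓜(ℂ, B))))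
    fun i j hq => hφ_le (2 * i) (2 * j + 1) (by lia) i (by lia) j (by lia) q hq).hasSum
  change inCanonicalIdeal (star r * X q * t)
  rw [hr.star_mul_mul_eq_of_hasSum ht hsum]
  refine inCanonicalIdeal_of_hasSum hsum fun p => ?_
  rw [← mul_assoc, multiplier_mul_coe]
  exact ⟨_, rfl⟩

end StableMultiplier

section Corona

open TopologicalSpace

theorem OrthogonalIsometries.continuousMap_const {ι A : Type*} [Ring A] [StarRing A]
    [TopologicalSpace A] [IsTopologicalRing A] [ContinuousStar A] {V : ι → A}
    (hV : OrthogonalIsometries V) (K : Type*) [TopologicalSpace K] :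
    OrthogonalIsometries fun i => ContinuousMap.const K (V i) where
  star_mul_self i := ContinuousMap.ext fun _ => hV.star_mul_self i
  star_mul_of_ne hij := ContinuousMap.ext fun _ => hV.star_mul_of_ne hij

theorem isSeparable_of_isLindelof {X : Type*} [TopologicalSpace X] [PseudoMetrizableSpace X]
    {s : Set X} (hs : IsLindelof s) : IsSeparable s := by
  have := isLindelof_iff_lindelofSpace.1 hs
  exact .of_subtype s

variable {B Q : Type*} [NonUnitalCStarAlgebra B] [CStarAlgebra Q]

theorem exists_orthogonalIsometries_star_mul_mul_eq_zero (hB : IsSigmaUnital B)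
    (hstable : IsStable B) {π : 𝓜(ℂ, B) →⋆ₐ[ℂ] Q} (hπ : Function.Surjective π)
    (hker : ∀ b : B, π (b : 𝓜(ℂ, B)) = 0) {c : Set Q} (hc : IsSeparable c) :
    ∃ V : Fin 2 → Q, OrthogonalIsometries V ∧ ∀ y ∈ c, star (V 0) * y * V 1 = 0 := by
  obtain ⟨D, hD, hcD⟩ := hc
  obtain ⟨f, hf⟩ := (hD.insert 0).exists_eq_range (Set.insert_nonempty 0 D)
  choose X hX using fun q => hπ (f q)
  obtain ⟨V, hV, hVX⟩ := exists_orthogonalIsometries_inCanonicalIdeal hB hstable X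
  refine ⟨fun i => π (V i), hV.map π, fun y hy => ?_⟩
  have hclosed : IsClosed {y | star (π (V 0)) * y * π (V 1) = 0} :=
    isClosed_eq (by fun_prop) continuous_const
  refine closure_minimal (fun z hz => ?_) hclosed (hcD hy)
  obtain ⟨q, rfl⟩ : z ∈ Set.range f := hf ▸ Set.mem_insert_of_mem 0 hz
  obtain ⟨b, hb⟩ := hVX q
  change star (π (V 0)) * f q * π (V 1) = 0
  rw [← hX, ← map_star, ← map_mul, ← map_mul, ← hb, hker]

end Corona

theorem stmt18_general {B Q : Type*} [NonUnitalCStarAlgebra B] [CStarAlgebra Q]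
    (hB : IsSigmaUnital B) (hstable : IsStable B) (π : 𝓜(ℂ, B) →⋆ₐ[ℂ] Q)
    (hπ : Function.Surjective π) (hker : ∀ b : B, π (b : 𝓜(ℂ, B)) = 0)
    (K : Type*) [TopologicalSpace K] [LocallyCompactSpace K] [LindelofSpace K] :
    IsK1Injective C(K, Q) ∧ IsK1Surjective C(K, Q) := by
  have hexists (u : C(K, Q)) : ∃ V : Fin 2 → C(K, Q),
      OrthogonalIsometries V ∧ star (V 0) * u * V 1 = 0 := by
    obtain ⟨V, hV, hVu⟩ := exists_orthogonalIsometries_star_mul_mul_eq_zero hB hstable hπ hker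
      (isSeparable_of_isLindelof (isLindelof_range u.continuous))
    exact ⟨_, hV.continuousMap_const K, ContinuousMap.ext fun k => hVu (u k) ⟨k, rfl⟩⟩
  obtain ⟨V, hV, -⟩ := hexists 1
  exact ⟨isK1Injective_of_exists_orthogonalIsometries fun u _ => hexists u, hV.isK1Surjective⟩

/-- Let `B` be a separable stable C*-algebra with corona `C(B)` (encoded
as a surjective `*`-homomorphism `π` onto a unital C*-algebra `Q` with kernel the canonical
ideal `B`), and let `K` be a compact Hausdorff space.  Then `C(K) ⊗ C(B) = C(K, Q)` is
K₁-injective and K₁-surjective: the natural map `U/U₀ → K₁` is a bijection.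

K₁ is encoded concretely: the K₁-class of a unitary `u` vanishes iff some stabilization
`u ⊕ 1ₙ` lies in the connected component of `1` in the unitaries of the matrix algebra,
and two unitaries have the same K₁-class iff they are joined after stabilization.
K₁-injectivity says a unitary of `C(K, Q)` whose class vanishes lies in `U₀`;
K₁-surjectivity says every unitary matrix class is, after stabilization, represented by a
unitary of `C(K, Q)`. -/
theorem stmt18 {B Q : Type*} [NonUnitalCStarAlgebra B] [TopologicalSpace.SeparableSpace B]
    [CStarAlgebra Q] (hstable : IsStable B)
    (π : 𝓜(ℂ, B) →⋆ₐ[ℂ] Q) (hπ : Function.Surjective π)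
    (hker : ∀ m : 𝓜(ℂ, B), π m = 0 ↔ inCanonicalIdeal m)
    (K : Type*) [TopologicalSpace K] [CompactSpace K] [T2Space K] :
    (∀ u ∈ unitary C(K, Q),
      (∃ n : ℕ, JoinedIn (unitary (Matrix (Fin (n + 1)) (Fin (n + 1)) C(K, Q)) : Set (Matrix (Fin (n + 1)) (Fin (n + 1)) C(K, Q)))
        (Matrix.diagonal fun i => if i = 0 then u else 1) 1) →
      JoinedIn (unitary C(K, Q) : Set C(K, Q)) u 1) ∧
    (∀ n : ℕ, ∀ w ∈ unitary (Matrix (Fin (n + 1)) (Fin (n + 1)) C(K, Q)),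
      ∃ v ∈ unitary C(K, Q), ∃ m : ℕ,
        JoinedIn
          (unitary (Matrix (Fin (n + 1) ⊕ Fin m) (Fin (n + 1) ⊕ Fin m) C(K, Q)) :
            Set (Matrix (Fin (n + 1) ⊕ Fin m) (Fin (n + 1) ⊕ Fin m) C(K, Q)))
          (Matrix.fromBlocks (Matrix.diagonal fun i => if i = 0 then v else 1) 0 0
            (1 : Matrix (Fin m) (Fin m) C(K, Q)))
          (Matrix.fromBlocks w 0 0 (1 : Matrix (Fin m) (Fin m) C(K, Q)))) :=
  stmt18_general (isSigmaUnital_of_separableSpace B) hstable π hπ (fun b => (hker b).2 ⟨b, rfl⟩) K
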